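/- Let B ≥ 1 and for each b ∈ Fin B let u_o^b, u_t^b ∈ SU(2), let L_b > 0, and let k ∈ ℝ satisfy sin(k·L_b) ≠ 0 for all b. Then the following are equivalent: (i) there exist ξ ∈ ℂ² and vectors μ^b, μ̂^b ∈ ℂ² (b ∈ Fin B), not all of the μ^b, μ̂^b equal to zero, such that for every b: u_o^b · (μ^b + μ̂^b) = ξ, u_t^b · (e^{ikL_b} μ^b + e^{−ikL_b} μ̂^b) = ξ, and ∑_{b} (e^{ikL_b} • u_t^b − u_o^b) · μ^b = 0; (ii) ∑_{b=1}^{B} ( (1/2)·trace(u_o^b (u_t^b)⁻¹) − cos(k L_b) ) / sin(k L_b) = 0. -/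

import Mathlib

open Matrix Complex

/-!
Write `z = exp (i k L)`, `w = exp (-i k L)`, so `z * w = 1` and `z - w = 2 i sin (k L) ≠ 0`. On each
bond the two matching conditions form an invertible linear system for the pair of coefficient
vectors, so they are determined by the vertex value `ξ`; in particular they all vanish iff `ξ = 0`,
since at least one bond exists. Explicitly `(z - w) μ = (u_t⁻¹ - w u_o⁻¹) ξ`, whence
`(z - w) (z u_t - u_o) μ = (z + w - u_t u_o⁻¹ - u_o u_t⁻¹) ξ`. For determinant one matrices of size
two, Cayley-Hamilton gives `A + A⁻¹ = (tr A) 1`, applied to `A = u_o u_t⁻¹`, so the right side is a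
scalar multiple of `ξ`. Summing, the last condition of the system becomes a nonzero constant times
the secular function times `ξ`, and a solution with `ξ ≠ 0` exists iff the secular function
vanishes. The key facts are `mul_adjugate_add_mul_adjugate` and `bond_current`.
-/

/-- The polarization of `A * adjugate A = (det A) 1` in size two. For determinant one it says that
`U V⁻¹` and its inverse add up to `(tr (U V⁻¹)) 1`. -/
lemma mul_adjugate_add_mul_adjugate (U V : Matrix (Fin 2) (Fin 2) ℂ) :
    U * V.adjugate + V * U.adjugate = Matrix.trace (U * V.adjugate) • 1 := by
  ext i j
  fin_cases i <;> fin_cases j <;>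
    simp [Matrix.adjugate_fin_two, Matrix.mul_apply, Fin.sum_univ_two, Matrix.trace_fin_two] <;>
    ring

/-- The matrix form of the current balance on one bond, before applying it to the vertex value. -/
lemma bond_matrix (U V : Matrix (Fin 2) (Fin 2) ℂ) (hU : U.det = 1) (hV : V.det = 1)
    (z w : ℂ) (hzw : z * w = 1) :
    (z • V - U) * (V.adjugate - w • U.adjugate)
      = (z + w - Matrix.trace (U * V.adjugate)) • (1 : Matrix (Fin 2) (Fin 2) ℂ) := by
  have h := mul_adjugate_add_mul_adjugate U V
  have h1 : V * V.adjugate = 1 := by rw [Matrix.mul_adjugate, hV, one_smul]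
  have h2 : U * U.adjugate = 1 := by rw [Matrix.mul_adjugate, hU, one_smul]
  rw [sub_smul, ← h]
  simp only [sub_mul, mul_sub, smul_mul_assoc, mul_smul_comm, smul_sub, smul_smul, mul_comm w z,
    hzw, h1, h2, add_smul, one_smul]
  abel

lemma inv_eq_adjugate_of_det_eq_one (V : Matrix (Fin 2) (Fin 2) ℂ) (hV : V.det = 1) :
    V⁻¹ = V.adjugate := by
  simp [Matrix.inv_def, hV]

lemma eq_adjugate_mulVec (V : Matrix (Fin 2) (Fin 2) ℂ) (hV : V.det = 1) {x ξ : Fin 2 → ℂ}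
    (h : V.mulVec x = ξ) : x = V.adjugate.mulVec ξ := by
  rw [← h, Matrix.mulVec_mulVec, Matrix.adjugate_mul, hV, one_smul, Matrix.one_mulVec]

lemma mulVec_adjugate_mulVec (V : Matrix (Fin 2) (Fin 2) ℂ) (hV : V.det = 1) (ξ : Fin 2 → ℂ) :
    V.mulVec (V.adjugate.mulVec ξ) = ξ := by
  rw [Matrix.mulVec_mulVec, Matrix.mul_adjugate, hV, one_smul, Matrix.one_mulVec]

/-- Eliminating `mh` from the two matching conditions on one bond: since `z ≠ w` in the application,
the vertex value determines `m`. -/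
lemma bond_coeff (U V : Matrix (Fin 2) (Fin 2) ℂ) (hU : U.det = 1) (hV : V.det = 1)
    (z w : ℂ) {m mh ξ : Fin 2 → ℂ} (h1 : U.mulVec (m + mh) = ξ)
    (h2 : V.mulVec (z • m + w • mh) = ξ) :
    (z - w) • m = (V.adjugate - w • U.adjugate).mulVec ξ := by
  have e1 := eq_adjugate_mulVec U hU h1
  have e2 := eq_adjugate_mulVec V hV h2
  rw [Matrix.sub_mulVec, Matrix.smul_mulVec, ← e1, ← e2]
  module

/-- On a bond satisfying the matching conditions, the contribution to the current balance at the
vertex is a scalar multiple of the vertex value, the scalar being `i` times the bond's term in the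
secular equation. -/
lemma bond_current (U V : Matrix (Fin 2) (Fin 2) ℂ) (hU : U.det = 1) (hV : V.det = 1)
    (z w c s : ℂ) (hz : z = c + I * s) (hw : w = c - I * s) (hzw : z * w = 1) (hs : s ≠ 0)
    {m mh ξ : Fin 2 → ℂ} (h1 : U.mulVec (m + mh) = ξ)
    (h2 : V.mulVec (z • m + w • mh) = ξ) :
    (z • V - U).mulVec m = (I * (((1 / 2 : ℂ) * Matrix.trace (U * V⁻¹) - c) / s)) • ξ := by
  have e := bond_coeff U V hU hV z w h1 h2
  have hd : z - w = 2 * I * s := by rw [hz, hw]; ring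
  have hd0 : z - w ≠ 0 := by rw [hd]; simp [hs]
  have e' : (z - w) • (z • V - U).mulVec m = (z + w - Matrix.trace (U * V.adjugate)) • ξ := by
    rw [← Matrix.mulVec_smul, e, Matrix.mulVec_mulVec, bond_matrix U V hU hV z w hzw,
      Matrix.smul_mulVec, Matrix.one_mulVec]
  refine smul_right_injective _ hd0 ?_
  simp only
  rw [e', smul_smul, inv_eq_adjugate_of_det_eq_one V hV, hd, hz, hw]
  congr 1
  field_simp
  linear_combination (2 * c - Matrix.trace (U * V.adjugate)) * I_sq

/-- Nontrivial solvability of the vertex matching conditions of the zero-mass Dirac rose graph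
is equivalent to the secular equation `∑_b (cos θ_b − cos kL_b)/sin kL_b = 0`,
where `cos θ_b = (1/2) tr(u_o^b (u_t^b)⁻¹)`. -/
theorem dirac_rose_secular_equation
    (B : ℕ) (hB : 1 ≤ B)
    (uo ut : Fin B → Matrix.specialUnitaryGroup (Fin 2) ℂ)
    (L : Fin B → ℝ) (hL : ∀ b, 0 < L b)
    (k : ℝ) (hk : ∀ b, Real.sin (k * L b) ≠ 0) :
    (∃ (ξ : Fin 2 → ℂ) (μ μh : Fin B → Fin 2 → ℂ),
        (¬ ∀ b, μ b = 0 ∧ μh b = 0) ∧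
        (∀ b, (uo b : Matrix (Fin 2) (Fin 2) ℂ).mulVec (μ b + μh b) = ξ ∧
          (ut b : Matrix (Fin 2) (Fin 2) ℂ).mulVec
            (Complex.exp (Complex.I * k * L b) • μ b +
              Complex.exp (-(Complex.I * k * L b)) • μh b) = ξ) ∧
        (∑ b, (Complex.exp (Complex.I * k * L b) • (ut b : Matrix (Fin 2) (Fin 2) ℂ) -
            (uo b : Matrix (Fin 2) (Fin 2) ℂ)).mulVec (μ b) = 0))
    ↔
    ∑ b, ((1 / 2 : ℂ) * Matrix.trace
          ((uo b : Matrix (Fin 2) (Fin 2) ℂ) * (ut b : Matrix (Fin 2) (Fin 2) ℂ)⁻¹) -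
        (Real.cos (k * L b) : ℂ)) / (Real.sin (k * L b) : ℂ) = 0 := by
  have hUd : ∀ b, (uo b : Matrix (Fin 2) (Fin 2) ℂ).det = 1 := fun b =>
    (Matrix.mem_specialUnitaryGroup_iff.1 (uo b).2).2
  have hVd : ∀ b, (ut b : Matrix (Fin 2) (Fin 2) ℂ).det = 1 := fun b =>
    (Matrix.mem_specialUnitaryGroup_iff.1 (ut b).2).2
  have hs : ∀ b, (Real.sin (k * L b) : ℂ) ≠ 0 := fun b => by exact_mod_cast hk b
  have hz : ∀ b, Complex.exp (Complex.I * k * L b)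
      = (Real.cos (k * L b) : ℂ) + I * (Real.sin (k * L b) : ℂ) := fun b => by
    rw [show Complex.I * k * L b = ((k * L b : ℝ) : ℂ) * I by push_cast; ring, Complex.exp_mul_I]
    push_cast; ring
  have hw : ∀ b, Complex.exp (-(Complex.I * k * L b))
      = (Real.cos (k * L b) : ℂ) - I * (Real.sin (k * L b) : ℂ) := fun b => by
    rw [show -(Complex.I * k * L b) = (-((k * L b : ℝ) : ℂ)) * I by push_cast; ring,
      Complex.exp_mul_I, Complex.cos_neg, Complex.sin_neg]
    push_cast; ring
  have hzw : ∀ b, Complex.exp (Complex.I * k * L b) * Complex.exp (-(Complex.I * k * L b)) = 1 :=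
    fun b => by rw [← Complex.exp_add, add_neg_cancel, Complex.exp_zero]
  have hd : ∀ b, Complex.exp (Complex.I * k * L b) - Complex.exp (-(Complex.I * k * L b)) ≠ 0 :=
    fun b => by
      rw [hz, hw, show ∀ x y : ℂ, x + I * y - (x - I * y) = 2 * I * y by intros; ring]
      simpa using hs b
  have key : ∀ (ξ : Fin 2 → ℂ) (μ μh : Fin B → Fin 2 → ℂ),
      (∀ b, (uo b : Matrix (Fin 2) (Fin 2) ℂ).mulVec (μ b + μh b) = ξ ∧
          (ut b : Matrix (Fin 2) (Fin 2) ℂ).mulVec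
            (Complex.exp (Complex.I * k * L b) • μ b +
              Complex.exp (-(Complex.I * k * L b)) • μh b) = ξ) →
      (∑ b, (Complex.exp (Complex.I * k * L b) • (ut b : Matrix (Fin 2) (Fin 2) ℂ) -
            (uo b : Matrix (Fin 2) (Fin 2) ℂ)).mulVec (μ b)) =
      (I * ∑ b, ((1 / 2 : ℂ) * Matrix.trace
          ((uo b : Matrix (Fin 2) (Fin 2) ℂ) * (ut b : Matrix (Fin 2) (Fin 2) ℂ)⁻¹) -
        (Real.cos (k * L b) : ℂ)) / (Real.sin (k * L b) : ℂ)) • ξ := by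
    intro ξ μ μh h
    rw [Finset.mul_sum, Finset.sum_smul]
    exact Finset.sum_congr rfl fun b _ => bond_current _ _ (hUd b) (hVd b) _ _ _ _ (hz b) (hw b)
      (hzw b) (hs b) (h b).1 (h b).2
  constructor
  · rintro ⟨ξ, μ, μh, hne, hb, hsum⟩
    rw [key ξ μ μh hb] at hsum
    rcases smul_eq_zero.1 hsum with h | h
    · exact (mul_eq_zero.1 h).resolve_left I_ne_zero
    · -- A zero vertex value forces every coefficient vector to vanish.
      subst h
      refine absurd (fun b => ?_) hne
      have e := bond_coeff _ _ (hUd b) (hVd b) _ _ (hb b).1 (hb b).2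
      rw [Matrix.mulVec_zero] at e
      have hμ : μ b = 0 := (smul_eq_zero.1 e).resolve_left (hd b)
      have e1 := eq_adjugate_mulVec _ (hUd b) (hb b).1
      rw [Matrix.mulVec_zero, hμ, zero_add] at e1
      exact ⟨hμ, e1⟩
  · intro hsec
    -- Any nonzero vertex value works: solve the invertible two by two system on each bond.
    let ξ : Fin 2 → ℂ := fun _ => 1
    let μ : Fin B → Fin 2 → ℂ := fun b =>
      (Complex.exp (Complex.I * k * L b) - Complex.exp (-(Complex.I * k * L b)))⁻¹ •
        ((ut b : Matrix (Fin 2) (Fin 2) ℂ).adjugate.mulVec ξ -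
          Complex.exp (-(Complex.I * k * L b)) •
            (uo b : Matrix (Fin 2) (Fin 2) ℂ).adjugate.mulVec ξ)
    let μh : Fin B → Fin 2 → ℂ := fun b =>
      (uo b : Matrix (Fin 2) (Fin 2) ℂ).adjugate.mulVec ξ - μ b
    have hb : ∀ b, (uo b : Matrix (Fin 2) (Fin 2) ℂ).mulVec (μ b + μh b) = ξ ∧
          (ut b : Matrix (Fin 2) (Fin 2) ℂ).mulVec
            (Complex.exp (Complex.I * k * L b) • μ b +
              Complex.exp (-(Complex.I * k * L b)) • μh b) = ξ := by
      intro b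
      constructor
      · rw [show μ b + μh b = (uo b : Matrix (Fin 2) (Fin 2) ℂ).adjugate.mulVec ξ from
          add_sub_cancel _ _]
        exact mulVec_adjugate_mulVec _ (hUd b) ξ
      · have hμ : (Complex.exp (Complex.I * k * L b) - Complex.exp (-(Complex.I * k * L b))) • μ b
            = (ut b : Matrix (Fin 2) (Fin 2) ℂ).adjugate.mulVec ξ -
              Complex.exp (-(Complex.I * k * L b)) •
                (uo b : Matrix (Fin 2) (Fin 2) ℂ).adjugate.mulVec ξ :=
          smul_inv_smul₀ (hd b) _
        have : Complex.exp (Complex.I * k * L b) • μ b +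
              Complex.exp (-(Complex.I * k * L b)) • μh b
            = (ut b : Matrix (Fin 2) (Fin 2) ℂ).adjugate.mulVec ξ := by
          rw [sub_smul] at hμ
          simp only [μh, smul_sub]
          linear_combination hμ
        rw [this]
        exact mulVec_adjugate_mulVec _ (hVd b) ξ
    refine ⟨ξ, μ, μh, fun h0 => ?_, hb, ?_⟩
    · have h1 := (hb ⟨0, hB⟩).1
      rw [(h0 _).1, (h0 _).2, add_zero, Matrix.mulVec_zero] at h1
      exact zero_ne_one (congrFun h1 0)
    · rw [key ξ μ μh hb, hsec, mul_zero, zero_smul]
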